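/- Let Y ⊆ ℝ^m and X ⊆ ℝⁿ be open, let f : Y → X be continuously differentiable, and let Λ ⊆ X × ℝⁿ be a closed conic subset. In T*(Y × X) = (Y × X) × (ℝ^m × ℝⁿ) consider the closed conic subsets B = {(y, x; 0, η) : y ∈ Y, (x; η) ∈ Λ} and N = {(y, f(y); −f'(y)ᵀη, η) : y ∈ Y, η ∈ ℝⁿ} (the conormal bundle to the graph of f). Then {(y₀; ξ + f'(y₀)ᵀη) : (y₀, f(y₀); ξ, η) ∈ B +̂ N} = f^#(Λ), where f^#(Λ) is the set of (y₀; θ₀) ∈ Y × ℝ^m for which there exist a sequence (xₙ; ηₙ) in Λ and a sequence yₙ in Y with yₙ → y₀, xₙ → f(y₀), f'(yₙ)ᵀηₙ → θ₀ and |xₙ − f(yₙ)| |ηₙ| → 0. (This is the identity g_d g_π^{−1}(h_d h_π^{−1}(Λ) +̂ T*_Y(Y×X)) = f^#(Λ) established in the proof of Theorem 1.2 of the paper.) -/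

import Mathlib

open Filter Topology

/-- The operation `A +̂ B` on closed conic subsets of a cotangent space `W × ℝ^k`:
`(w₀; ζ₀) ∈ W × ℝ^k` belongs to `A +̂ B` iff there are sequences `(wₙ; ζₙ)` in `A` and
`(vₙ; ηₙ)` in `B` with `wₙ → w₀`, `vₙ → w₀`, `ζₙ + ηₙ → ζ₀` and `|wₙ - vₙ| |ζₙ| → 0`. -/
def hatSum {V : Type*} [NormedAddCommGroup V] (W : Set V) (A B : Set (V × V)) :
    Set (V × V) :=
  {p | p.1 ∈ W ∧ ∃ x ξ y η : ℕ → V,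
    (∀ n, (x n, ξ n) ∈ A) ∧ (∀ n, (y n, η n) ∈ B) ∧
    Tendsto x atTop (nhds p.1) ∧ Tendsto y atTop (nhds p.1) ∧
    Tendsto (fun n => ξ n + η n) atTop (nhds p.2) ∧
    Tendsto (fun n => ‖x n - y n‖ * ‖ξ n‖) atTop (nhds (0 : ℝ))}

/-- A subset of `X × ℝⁿ` is conic: stable under positive scalings of the covector. -/
def IsConic {V : Type*} [NormedAddCommGroup V] [NormedSpace ℝ V] (A : Set (V × V)) : Prop :=
  ∀ p ∈ A, ∀ lam : ℝ, 0 < lam → (p.1, lam • p.2) ∈ A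

/-- `f^#(Λ)`: the set of `(y₀; θ₀) ∈ Y × ℝ^m` for which there are a sequence `(xₙ; ηₙ)`
in `Λ` and a sequence `yₙ` in `Y` with `yₙ → y₀`, `xₙ → f(y₀)`, `f'(yₙ)ᵀ ηₙ → θ₀` and
`|xₙ - f(yₙ)| |ηₙ| → 0`. -/
def fSharp {m n : ℕ} (Y : Set (EuclideanSpace ℝ (Fin m)))
    (f : EuclideanSpace ℝ (Fin m) → EuclideanSpace ℝ (Fin n))
    (f' : EuclideanSpace ℝ (Fin m) → (EuclideanSpace ℝ (Fin m) →L[ℝ] EuclideanSpace ℝ (Fin n)))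
    (Λ : Set (EuclideanSpace ℝ (Fin n) × EuclideanSpace ℝ (Fin n))) :
    Set (EuclideanSpace ℝ (Fin m) × EuclideanSpace ℝ (Fin m)) :=
  {q | q.1 ∈ Y ∧
    ∃ (x η : ℕ → EuclideanSpace ℝ (Fin n)) (y : ℕ → EuclideanSpace ℝ (Fin m)),
      (∀ k, (x k, η k) ∈ Λ) ∧ (∀ k, y k ∈ Y) ∧
      Tendsto y atTop (nhds q.1) ∧ Tendsto x atTop (nhds (f q.1)) ∧
      Tendsto (fun k => ContinuousLinearMap.adjoint (f' (y k)) (η k)) atTop (nhds q.2) ∧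
      Tendsto (fun k => ‖x k - f (y k)‖ * ‖η k‖) atTop (nhds (0 : ℝ))}

/-- `h_d h_π^{-1}(Λ) = {(y, x; 0, η) : y ∈ Y, (x; η) ∈ Λ}` in `T*(Y × X)`. -/
def setB {m n : ℕ} (Y : Set (EuclideanSpace ℝ (Fin m)))
    (Λ : Set (EuclideanSpace ℝ (Fin n) × EuclideanSpace ℝ (Fin n))) :
    Set ((EuclideanSpace ℝ (Fin m) × EuclideanSpace ℝ (Fin n)) ×
      (EuclideanSpace ℝ (Fin m) × EuclideanSpace ℝ (Fin n))) :=
  {p | p.1.1 ∈ Y ∧ (p.1.2, p.2.2) ∈ Λ ∧ p.2.1 = 0}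

/-- `T*_Y(Y × X) = {(y, f(y); -f'(y)ᵀ η, η) : y ∈ Y, η ∈ ℝⁿ}`, the conormal bundle to the
graph of `f`. -/
def setN {m n : ℕ} (Y : Set (EuclideanSpace ℝ (Fin m)))
    (f : EuclideanSpace ℝ (Fin m) → EuclideanSpace ℝ (Fin n))
    (f' : EuclideanSpace ℝ (Fin m) → (EuclideanSpace ℝ (Fin m) →L[ℝ] EuclideanSpace ℝ (Fin n))) :
    Set ((EuclideanSpace ℝ (Fin m) × EuclideanSpace ℝ (Fin n)) ×
      (EuclideanSpace ℝ (Fin m) × EuclideanSpace ℝ (Fin n))) :=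
  {p | p.1.1 ∈ Y ∧ p.1.2 = f p.1.1 ∧
    p.2.1 = -(ContinuousLinearMap.adjoint (f' p.1.1) p.2.2)}

/-- The identity `g_d g_π^{-1}(h_d h_π^{-1}(Λ) +̂ T*_Y(Y × X)) = f^#(Λ)` from the proof of
Theorem 1.2: for a C¹ map `f : Y → X` and a closed conic `Λ ⊆ X × ℝⁿ`,
`{(y₀; ξ + f'(y₀)ᵀ η) : (y₀, f(y₀); ξ, η) ∈ B +̂ N} = f^#(Λ)`. -/
theorem stmt6 {m n : ℕ}
    (Y : Set (EuclideanSpace ℝ (Fin m))) (hY : IsOpen Y)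
    (X : Set (EuclideanSpace ℝ (Fin n))) (hX : IsOpen X)
    (f : EuclideanSpace ℝ (Fin m) → EuclideanSpace ℝ (Fin n))
    (hfX : ∀ y ∈ Y, f y ∈ X)
    (f' : EuclideanSpace ℝ (Fin m) → (EuclideanSpace ℝ (Fin m) →L[ℝ] EuclideanSpace ℝ (Fin n)))
    (hf' : ∀ y ∈ Y, HasFDerivAt f (f' y) y)
    (hf'cont : ContinuousOn f' Y)
    (Λ : Set (EuclideanSpace ℝ (Fin n) × EuclideanSpace ℝ (Fin n)))
    (hΛX : ∀ p ∈ Λ, p.1 ∈ X)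
    (hΛclosed : closure Λ ∩ {p : EuclideanSpace ℝ (Fin n) × EuclideanSpace ℝ (Fin n) |
      p.1 ∈ X} ⊆ Λ)
    (hΛconic : IsConic Λ) :
    {q : EuclideanSpace ℝ (Fin m) × EuclideanSpace ℝ (Fin m) | q.1 ∈ Y ∧
      ∃ ξ : EuclideanSpace ℝ (Fin m), ∃ η : EuclideanSpace ℝ (Fin n),
        ((q.1, f q.1), (ξ, η)) ∈ hatSum (Y ×ˢ X) (setB Y Λ) (setN Y f f') ∧
        q.2 = ξ + ContinuousLinearMap.adjoint (f' q.1) η}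
    = fSharp Y f f' Λ := by
  ext ⟨y₀, θ₀⟩
  simp only [Set.mem_ofPred_eq, fSharp, hatSum]
  have hfc : ∀ y ∈ Y, ContinuousAt f y := fun y hy => (hf' y hy).continuousAt
  constructor
  · rintro ⟨hy₀, ξ, η, ⟨-, p, a, q, b, hA, hB, hp, hq, hab, hn⟩, rfl⟩
    refine ⟨hy₀, fun k => (p k).2, fun k => (a k).2, fun k => (q k).1,
      fun k => (hA k).2.1, fun k => (hB k).1, hq.fst_nhds, hp.snd_nhds, ?_, ?_⟩
    · have h1 : Tendsto (fun k => f' (q k).1) atTop (nhds (f' y₀)) :=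
        ((hf'cont.continuousAt (hY.mem_nhds hy₀)).tendsto).comp hq.fst_nhds
      have h2 : Tendsto (fun k => ContinuousLinearMap.adjoint (f' (q k).1)) atTop
          (nhds (ContinuousLinearMap.adjoint (f' y₀))) :=
        ((ContinuousLinearMap.adjoint (𝕜 := ℝ) (E := EuclideanSpace ℝ (Fin m))
          (F := EuclideanSpace ℝ (Fin n))).continuous.tendsto _).comp h1
      have h3 := ((isBoundedBilinearMap_apply (𝕜 := ℝ) (E := EuclideanSpace ℝ (Fin n))
        (F := EuclideanSpace ℝ (Fin m))).continuous.tendsto _).comp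
          (h2.prodMk_nhds hab.snd_nhds)
      have h4 := hab.fst_nhds.add h3
      refine h4.congr fun k => ?_
      have e1 : (a k).1 = 0 := (hA k).2.2
      have e2 : (b k).1 = -(ContinuousLinearMap.adjoint (f' (q k).1) (b k).2) := (hB k).2.2
      simp only [Function.comp_apply, Prod.fst_add, Prod.snd_add, e1, e2, map_add]
      abel
    · refine squeeze_zero (fun k => by positivity) (fun k => ?_) hn
      have e : f (q k).1 = (q k).2 := ((hB k).2.1).symm
      rw [e]
      exact mul_le_mul (norm_snd_le (p k - q k)) (norm_snd_le (a k))
        (norm_nonneg _) (norm_nonneg _)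
  · rintro ⟨hy₀, x, η, y, hΛ, hy, hyt, hxt, hθ, hn⟩
    refine ⟨hy₀, θ₀, 0, ⟨⟨hy₀, hfX _ hy₀⟩, fun k => (y k, x k), fun k => (0, η k),
      fun k => (y k, f (y k)),
      fun k => (ContinuousLinearMap.adjoint (f' (y k)) (η k), -η k),
      fun k => ⟨hy k, hΛ k, rfl⟩, fun k => ⟨hy k, rfl, by simp⟩,
      hyt.prodMk_nhds hxt, hyt.prodMk_nhds ((hfc _ hy₀).tendsto.comp hyt), ?_, ?_⟩, by simp⟩
    · simpa using hθ.prodMk_nhds (tendsto_const_nhds (x := (0 : EuclideanSpace ℝ (Fin n))))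
    · simpa [Prod.norm_def] using hn
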